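/- Let f : ℝ³ → ℝ³ be differentiable with component functions f₁, f₂, f₃ and constants M_{ki} ≥ 0 such that |∂f_k/∂x_i (x)| ≤ M_{ki} for all x ∈ ℝ³; set γ₀ = max_k Σ_{i=1}^{3} M_{ki}. Let X_E, ΔX ∈ ℝ³ with f(X_E) = X_E and set X_T = X_E + ΔX. Then the squared error satisfies ‖X_T − f(X_T)‖² ≤ (√3·γ₀ + 1)² · ‖ΔX‖², where ‖·‖ is the Euclidean norm. -/

import Mathlib

/-!
Each component of `Df(x) v` is `∑ i, vᵢ ∂ᵢf_k(x)`, hence at most `γ₀ ‖v‖` in absolute value, since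
every coordinate of `v` is bounded by the Euclidean norm. Three such components give the
operator-norm bound `‖Df(x)‖ ≤ √3 γ₀`, and the mean value inequality turns it into a Lipschitz
bound for `f`. As `f X_E = X_E`, the error is `ΔX - (f X_T - f X_E)`, and the triangle inequality
finishes.
-/

/-- If the matrix of `L` in the standard basis has `ℓ¹` row norms at most `γ`, then the Euclidean
operator norm of `L` is at most `√3 γ`. -/
lemma opNorm_le_sqrt_three_mul
    (L : EuclideanSpace ℝ (Fin 3) →L[ℝ] EuclideanSpace ℝ (Fin 3)) (γ : ℝ) (hγ : 0 ≤ γ)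
    (hL : ∀ k, ∑ i, |L (EuclideanSpace.single i 1) k| ≤ γ) :
    ‖L‖ ≤ Real.sqrt 3 * γ := by
  refine L.opNorm_le_bound (by positivity) fun v => ?_
  have hcomp : ∀ k, |L v k| ≤ γ * ‖v‖ := by
    intro k
    have hv : v = ∑ i, v i • EuclideanSpace.single i (1 : ℝ) := by
      ext j
      simp [Finset.sum_apply, Pi.single_apply]
    have hLv : L v k = ∑ i, v i * L (EuclideanSpace.single i 1) k := by
      conv_lhs => rw [hv]
      simp [map_sum]
    calc |L v k| ≤ ∑ i, |v i * L (EuclideanSpace.single i 1) k| := by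
          rw [hLv]; exact Finset.abs_sum_le_sum_abs _ _
      _ ≤ ∑ i, |L (EuclideanSpace.single i 1) k| * ‖v‖ := by
          refine Finset.sum_le_sum fun i _ => ?_
          rw [abs_mul, mul_comm]
          exact mul_le_mul_of_nonneg_left (PiLp.norm_apply_le v i) (abs_nonneg _)
      _ ≤ γ * ‖v‖ := by
          rw [← Finset.sum_mul]
          exact mul_le_mul_of_nonneg_right (hL k) (norm_nonneg _)
  refine (sq_le_sq₀ (norm_nonneg _) (by positivity)).1 ?_
  calc ‖L v‖ ^ 2 = ∑ k, |L v k| ^ 2 := by simp [EuclideanSpace.norm_sq_eq]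
    _ ≤ ∑ _k : Fin 3, (γ * ‖v‖) ^ 2 :=
        Finset.sum_le_sum fun k _ => pow_le_pow_left₀ (abs_nonneg _) (hcomp k) 2
    _ = (Real.sqrt 3 * γ * ‖v‖) ^ 2 := by
        simp [mul_pow]; ring

open Finset in
/-- Corrected combination of the paper's Lemmas 1 and 2 (cf. the paper's Eq. 17):
if the differentiable map `f : ℝ³ → ℝ³` has partial derivatives bounded by `M_{ki}`,
`γ₀ = max_k Σ_i M_{ki}` bounds the infinity-induced norm of the Jacobian, and `f`
interpolates exactly at the trained point `X_E`, then the squared tracking error at the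
test point `X_T = X_E + ΔX` satisfies `‖X_T − f(X_T)‖² ≤ (√3·γ₀ + 1)²‖ΔX‖²`. -/
theorem stmt_13
    (f : EuclideanSpace ℝ (Fin 3) → EuclideanSpace ℝ (Fin 3))
    (hf : Differentiable ℝ f)
    (M : Fin 3 → Fin 3 → ℝ) (hM : ∀ k i, 0 ≤ M k i)
    (hbound : ∀ (x : EuclideanSpace ℝ (Fin 3)) (k i : Fin 3),
      |fderiv ℝ f x (EuclideanSpace.single i 1) k| ≤ M k i)
    (γ₀ : ℝ) (hγ₀ : γ₀ = univ.sup' univ_nonempty fun k : Fin 3 => ∑ i, M k i)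
    (X_E ΔX : EuclideanSpace ℝ (Fin 3)) (hinterp : f X_E = X_E)
    (X_T : EuclideanSpace ℝ (Fin 3)) (hXT : X_T = X_E + ΔX) :
    ‖X_T - f X_T‖ ^ 2 ≤ (Real.sqrt 3 * γ₀ + 1) ^ 2 * ‖ΔX‖ ^ 2 := by
  have hrow : ∀ k, ∑ i, M k i ≤ γ₀ := fun k => by
    rw [hγ₀]
    exact Finset.le_sup' (fun k : Fin 3 => ∑ i, M k i) (mem_univ k)
  have hγ : 0 ≤ γ₀ := (sum_nonneg fun i _ => hM 0 i).trans (hrow 0)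
  have hlip : ‖f X_T - f X_E‖ ≤ Real.sqrt 3 * γ₀ * ‖X_T - X_E‖ :=
    convex_univ.norm_image_sub_le_of_norm_fderiv_le (𝕜 := ℝ) (fun x _ => hf x)
      (fun x _ => opNorm_le_sqrt_three_mul _ γ₀ hγ fun k =>
        (sum_le_sum fun i _ => hbound x k i).trans (hrow k))
      (Set.mem_univ _) (Set.mem_univ _)
  have hΔ : X_T - X_E = ΔX := by rw [hXT, add_sub_cancel_left]
  have herr : X_T - f X_T = ΔX - (f X_T - f X_E) := by
    rw [hinterp, ← hΔ]; abel
  rw [hΔ] at hlip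
  rw [← mul_pow, herr]
  refine pow_le_pow_left₀ (norm_nonneg _) ?_ 2
  linarith [norm_sub_le ΔX (f X_T - f X_E)]
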